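/- Let h : ℕ → ℕ satisfy h(q) ≥ 1 for all q, h(q) → ∞ as q → ∞ through the primes, and h(q)^r/√q → 0 as q → ∞ through the primes for every positive integer r. For an odd prime p and an integer x, set S_{h(p)}(x) = ∑_{n=x+1}^{x+h(p)} χ_p(n). Then for every real number λ, (1/p)·#{x ∈ {0, 1, …, p-1} : S_{h(p)}(x) ≤ λ·√(h(p))} → (1/√(2π))·∫_{-∞}^{λ} e^{-t²/2} dt as p → ∞ through the primes. -/

import Mathlib

/-!
Let `x` be uniform in `ZMod p`. Moments of the sum `∑ j, χ_p(x + a j)` over distinct shifts expand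
into averages of `χ_p(∏ i, (x + a (t i)))`. If every index occurs an even number of times in `t`
the average is close to `1`; otherwise the product is not a square up to a scalar and the average
is `O(k² / √p)`. These are the moments of a sum of independent signs, up to `O(h^k k² / √p)`. Taylor
expansion then shows that the characteristic function of the normalised sum is asymptotic to
`cos(t / √h) ^ h`, which tends to `exp (-t² / 2)`, and Lévy's convergence theorem concludes.

The character sum bound comes from Stepanov's method: an auxiliary polynomial vanishing to high
order at the points where `f ^ ((p - 1) / 2)` takes a prescribed value is found by linear algebra,
and its degree limits the number of such points.
-/

section TwistedDerivative

open Polynomial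

variable {R : Type*} [CommRing R]

/-- The operator `s ↦ c f' s + f s'`, that is `f ^ (1 - c) (f ^ c s)'` freed of fractional powers.
It keeps track of the cofactor `s` when a product with a power of `f` is differentiated. -/
noncomputable def twistedDerivative (f : R[X]) (c : R) : R[X] →ₗ[R] R[X] :=
  LinearMap.mulLeft R (C c * derivative f) + LinearMap.mulLeft R f ∘ₗ derivative

lemma twistedDerivative_apply (f : R[X]) (c : R) (s : R[X]) :
    twistedDerivative f c s = C c * derivative f * s + f * derivative s :=
  rfl

lemma mul_mem_degreeLT {f s : R[X]} {m n : ℕ} (hf : f.natDegree ≤ m) (hs : s ∈ degreeLT R n) :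
    f * s ∈ degreeLT R (n + m) := by
  rw [mem_degreeLT] at hs ⊢
  calc (f * s).degree ≤ f.degree + s.degree := degree_mul_le f s
    _ ≤ m + s.degree := by gcongr; exact natDegree_le_iff_degree_le.mp hf
    _ < m + n := WithBot.add_lt_add_left (WithBot.natCast_ne_bot m) hs
    _ = (n + m : ℕ) := by rw [add_comm]; norm_cast

lemma twistedDerivative_mem_degreeLT (f : R[X]) (c : R) {s : R[X]} {n : ℕ}
    (hs : s ∈ degreeLT R n) : twistedDerivative f c s ∈ degreeLT R (n + f.natDegree) := by
  have hs' : derivative s ∈ degreeLT R n :=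
    mem_degreeLT.mpr (degree_derivative_le.trans_lt (mem_degreeLT.mp hs))
  have hf' : (C c * derivative f).natDegree ≤ f.natDegree :=
    (natDegree_C_mul_le _ _).trans ((natDegree_derivative_le f).trans (Nat.sub_le _ _))
  exact Submodule.add_mem _ (mul_mem_degreeLT hf' hs) (mul_mem_degreeLT le_rfl hs')

lemma derivative_pow_succ_mul_mul {f G : R[X]} {c : R}
    (hG : f * derivative G = C c * derivative f * G) (s : R[X]) (n : ℕ) :
    derivative (f ^ (n + 1) * s * G) = f ^ n * twistedDerivative f ((n + 1 : ℕ) + c) s * G := by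
  simp only [twistedDerivative_apply, derivative_mul, derivative_pow_succ, C_add, map_natCast,
    Nat.cast_add, Nat.cast_one, C_1]
  linear_combination f ^ n * s * hG

/-- The operator carrying the cofactor `s` of `f ^ l * s * G` to the one of its `k`-th derivative,
for any `G` with `f G' = c f' G`; see `iterate_derivative_pow_mul_mul`. -/
noncomputable def iterTwistedDerivative (f : R[X]) (c : R) (l : ℕ) : ℕ → R[X] →ₗ[R] R[X]
  | 0 => LinearMap.id
  | k + 1 => twistedDerivative f ((l - k : ℕ) + c) ∘ₗ iterTwistedDerivative f c l k

lemma iterTwistedDerivative_succ (f : R[X]) (c : R) (l k : ℕ) (s : R[X]) :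
    iterTwistedDerivative f c l (k + 1) s =
      twistedDerivative f ((l - k : ℕ) + c) (iterTwistedDerivative f c l k s) :=
  rfl

lemma iterTwistedDerivative_mem_degreeLT (f : R[X]) (c : R) (l k : ℕ) {s : R[X]} {n : ℕ}
    (hs : s ∈ degreeLT R n) :
    iterTwistedDerivative f c l k s ∈ degreeLT R (n + k * f.natDegree) := by
  induction k with
  | zero => simpa [iterTwistedDerivative] using hs
  | succ k ih =>
    rw [iterTwistedDerivative_succ, add_mul, one_mul, ← add_assoc]
    exact twistedDerivative_mem_degreeLT f _ ih

lemma iterate_derivative_pow_mul_mul {f G : R[X]} {c : R}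
    (hG : f * derivative G = C c * derivative f * G) (s : R[X]) {k l : ℕ} (hkl : k ≤ l) :
    derivative^[k] (f ^ l * s * G) = f ^ (l - k) * iterTwistedDerivative f c l k s * G := by
  induction k with
  | zero => simp [iterTwistedDerivative]
  | succ k ih =>
    obtain ⟨n, hn⟩ : ∃ n, l - k = n + 1 := Nat.exists_eq_add_one.mpr (by omega)
    rw [Function.iterate_succ_apply', ih (by omega), hn, derivative_pow_succ_mul_mul hG,
      show l - (k + 1) = n by omega, iterTwistedDerivative_succ, hn]

end TwistedDerivative

section LinearAlgebra

open Polynomial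

lemma exists_ne_zero_forall_apply_eq_zero {K V : Type*} [Field K] [AddCommGroup V] [Module K V]
    [FiniteDimensional K V] {l D : ℕ} (T : Fin l → V →ₗ[K] K[X])
    (hT : ∀ k v, T k v ∈ degreeLT K D) (hdim : l * D < Module.finrank K V) :
    ∃ v ≠ 0, ∀ k, T k v = 0 := by
  let Φ : V →ₗ[K] Fin l → degreeLT K D := LinearMap.pi fun k => (T k).codRestrict _ (hT k)
  have hker : LinearMap.ker Φ ≠ ⊥ := by
    apply LinearMap.ker_ne_bot_of_finrank_lt
    simpa [Module.finrank_pi_fintype, (degreeLTEquiv K D).finrank_eq] using hdim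
  obtain ⟨v, hv, hv0⟩ := Submodule.ne_bot_iff _ |>.mp hker
  exact ⟨v, hv0, fun k => congrArg Subtype.val (congrFun (LinearMap.mem_ker.mp hv) k)⟩

lemma card_mul_le_natDegree_of_le_rootMultiplicity {K : Type*} [CommRing K] [IsDomain K]
    {P : K[X]} {l : ℕ} {S : Finset K} (hS : ∀ x ∈ S, l ≤ P.rootMultiplicity x) :
    S.card * l ≤ P.natDegree := by
  classical
  have hle : l • S.val ≤ P.roots := by
    refine Multiset.le_iff_count.mpr fun x => ?_
    rw [Multiset.count_nsmul, count_roots]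
    by_cases hx : x ∈ S
    · simpa [Multiset.count_eq_one_of_mem S.nodup hx] using hS x hx
    · simp [Multiset.count_eq_zero_of_notMem hx]
  calc S.card * l = (l • S.val).card := by simp [mul_comm]
    _ ≤ P.roots.card := Multiset.card_le_card hle
    _ ≤ P.natDegree := card_roots' P

end LinearAlgebra

section Stepanov

open Polynomial

variable {F : Type*} [Field F]

lemma eq_zero_and_eq_zero_of_sq_mul_eq {f r s : F[X]} (hf : ∀ c t, f ≠ C c * t ^ 2) {c : F}
    (hc : c ≠ 0) (h : r ^ 2 * f = C c * s ^ 2) : r = 0 ∧ s = 0 := by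
  have hr : r = 0 := by
    by_contra hr
    have hdvd : r ^ 2 ∣ s ^ 2 := by
      rw [← (isUnit_C.mpr hc.isUnit).dvd_mul_left, ← h]
      exact dvd_mul_right _ _
    obtain ⟨t, rfl⟩ := (IsIntegrallyClosed.pow_dvd_pow_iff two_ne_zero).mp hdvd
    refine hf c t (mul_left_cancel₀ (pow_ne_zero 2 hr) ?_)
    rw [h]
    ring
  subst hr
  simpa [hc] using h.symm

lemma natDegree_sq_mul_lt {r g : F[X]} {d n : ℕ} (hr : r ∈ degreeLT F d)
    (hd : 2 * d + g.natDegree ≤ n + 1) (hn : 0 < n) : (r ^ 2 * g).natDegree < n := by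
  rcases eq_or_ne r 0 with rfl | hr0
  · simpa using hn
  · have hrd : r.natDegree < d := by
      rw [mem_degreeLT, degree_eq_natDegree hr0] at hr
      exact_mod_cast hr
    have := natDegree_mul_le (p := r ^ 2) (q := g)
    have := natDegree_pow_le (p := r) (n := 2)
    omega

lemma exists_stepanov_coefficients (f : F[X]) (a c : F) {d J l : ℕ}
    (hcount : l * (d + l * f.natDegree + J) < 2 * (J * d)) :
    ∃ r s : Fin J → F[X], (∀ j, r j ∈ degreeLT F d) ∧ (∀ j, s j ∈ degreeLT F d) ∧
      ¬ (∀ j, r j = 0 ∧ s j = 0) ∧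
      ∀ k < l, ∑ j, (iterTwistedDerivative f 0 l k (r j)
        + C a * iterTwistedDerivative f c l k (s j)) * X ^ (j : ℕ) = 0 := by
  have : Module.finrank F (degreeLT F d) = d := by simp [(degreeLTEquiv F d).finrank_eq]
  let T (k : Fin l) : (Fin J → degreeLT F d × degreeLT F d) →ₗ[F] F[X] :=
    ∑ j : Fin J, LinearMap.mulRight F (X ^ (j : ℕ)) ∘ₗ
    ((iterTwistedDerivative f 0 l k ∘ₗ (degreeLT F d).subtype).coprod
      (LinearMap.mulLeft F (C a) ∘ₗ iterTwistedDerivative f c l k ∘ₗ (degreeLT F d).subtype)) ∘ₗ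
    LinearMap.proj j
  have hT (k v) : T k v = ∑ j, (iterTwistedDerivative f 0 l k (v j).1
      + C a * iterTwistedDerivative f c l k (v j).2) * X ^ (j : ℕ) := by
    simp only [T, LinearMap.sum_apply, LinearMap.comp_apply, LinearMap.coprod_apply,
      LinearMap.mulRight_apply, LinearMap.mulLeft_apply, LinearMap.proj_apply,
      Submodule.subtype_apply]
  have hdeg (k v) : T k v ∈ degreeLT F (d + l * f.natDegree + J) := by
    rw [hT]
    refine Submodule.sum_mem _ fun j _ => ?_
    have hk : d + k * f.natDegree ≤ d + l * f.natDegree := by gcongr; exact k.2.le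
    have hr := degreeLT_mono hk (iterTwistedDerivative_mem_degreeLT f 0 l k (v j).1.2)
    have hs := degreeLT_mono hk (iterTwistedDerivative_mem_degreeLT f c l k (v j).2.2)
    rw [mul_comm _ (X ^ (j : ℕ))]
    refine mul_mem_degreeLT (by simp) (Submodule.add_mem _ hr ?_)
    exact mul_mem_degreeLT (m := 0) (by simp) hs
  obtain ⟨v, hv0, hv⟩ := exists_ne_zero_forall_apply_eq_zero T hdeg (by
    rw [Module.finrank_pi_fintype]
    simp only [Module.finrank_prod, this, Finset.sum_const, Finset.card_univ, Fintype.card_fin,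
      smul_eq_mul]
    linarith)
  refine ⟨fun j => (v j).1, fun j => (v j).2, fun j => (v j).1.2, fun j => (v j).2.2,
    fun h => hv0 ?_, fun k hk => hT ⟨k, hk⟩ v ▸ hv ⟨k, hk⟩⟩
  funext j
  exact Prod.ext (Subtype.ext (h j).1) (Subtype.ext (h j).2)

variable [Fintype F]

/-- Stepanov's auxiliary polynomial `∑ j, (r_j + s_j f ^ ((q - 1) / 2)) X ^ (j q)` over a field of
odd cardinality `q`. At a point `x` with `f(x) ^ ((q - 1) / 2) = a` it takes the same value as the
polynomial `∑ j, (r_j + a s_j) X ^ j` of much smaller degree. -/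
noncomputable def stepanovPoly (f : F[X]) {J : ℕ} (r s : Fin J → F[X]) : F[X] :=
  ∑ j, (r j + s j * f ^ (Fintype.card F / 2)) * X ^ (j * Fintype.card F)

lemma X_pow_card_dvd_pow_card_sub_C (f : F[X]) :
    (X : F[X]) ^ Fintype.card F ∣ f ^ Fintype.card F - C (f.eval 0) := by
  have hX : X ∣ f - C (f.eval 0) := by simp [X_dvd_iff, coeff_zero_eq_eval_zero]
  have h := map_dvd (expand F (Fintype.card F)) hX
  rwa [map_sub, expand_X, expand_C, FiniteField.expand_card] at h

lemma eq_zero_and_eq_zero_of_X_pow_card_dvd (hF : ringChar F ≠ 2) {f : F[X]} (hf0 : f.eval 0 ≠ 0)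
    (hf : ∀ c t, f ≠ C c * t ^ 2) {d : ℕ} (hd : 2 * d + f.natDegree ≤ Fintype.card F + 1)
    {r s : F[X]} (hr : r ∈ degreeLT F d) (hs : s ∈ degreeLT F d)
    (h : X ^ Fintype.card F ∣ r + s * f ^ (Fintype.card F / 2)) : r = 0 ∧ s = 0 := by
  have hq : 2 * (Fintype.card F / 2) + 1 = Fintype.card F :=
    Nat.two_mul_div_two_add_one_of_odd (Nat.odd_iff.mpr (FiniteField.odd_card_of_char_ne_two hF))
  have hdvd : X ^ Fintype.card F ∣ r ^ 2 * f - s ^ 2 * C (f.eval 0) := by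
    have hpow : f ^ Fintype.card F = (f ^ (Fintype.card F / 2)) ^ 2 * f := by
      rw [← pow_mul, ← pow_succ, mul_comm _ 2, hq]
    have hid : r ^ 2 * f - s ^ 2 * C (f.eval 0)
        = (r + s * f ^ (Fintype.card F / 2)) * ((r - s * f ^ (Fintype.card F / 2)) * f)
          + (f ^ Fintype.card F - C (f.eval 0)) * s ^ 2 := by
      rw [hpow]
      ring
    rw [hid]
    exact dvd_add (h.mul_right _) ((X_pow_card_dvd_pow_card_sub_C f).mul_right _)
  have hzero : r ^ 2 * f - s ^ 2 * C (f.eval 0) = 0 := by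
    refine eq_zero_of_dvd_of_natDegree_lt hdvd ?_
    rw [natDegree_X_pow]
    refine (natDegree_sub_le _ _).trans_lt (max_lt ?_ ?_)
    · exact natDegree_sq_mul_lt hr hd Fintype.card_pos
    · exact natDegree_sq_mul_lt hs (by rw [natDegree_C]; omega) Fintype.card_pos
  exact eq_zero_and_eq_zero_of_sq_mul_eq hf hf0 (by linear_combination hzero)

lemma coefficients_eq_zero_of_stepanovPoly_eq_zero (hF : ringChar F ≠ 2) {f : F[X]}
    (hf0 : f.eval 0 ≠ 0) (hf : ∀ c t, f ≠ C c * t ^ 2) {d : ℕ}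
    (hd : 2 * d + f.natDegree ≤ Fintype.card F + 1) {J : ℕ} {r s : Fin J → F[X]}
    (hr : ∀ j, r j ∈ degreeLT F d) (hs : ∀ j, s j ∈ degreeLT F d) (h : stepanovPoly f r s = 0)
    (j : Fin J) : r j = 0 ∧ s j = 0 := by
  induction J with
  | zero => exact j.elim0
  | succ J ih =>
    have hsplit : stepanovPoly f r s = r 0 + s 0 * f ^ (Fintype.card F / 2)
        + X ^ Fintype.card F * stepanovPoly f (fun j => r j.succ) (fun j => s j.succ) := by
      simp only [stepanovPoly, Fin.sum_univ_succ, Finset.mul_sum, Fin.val_zero, Fin.val_succ,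
        add_mul, one_mul, zero_mul, pow_add, pow_zero, mul_one]
      congr 1
      exact Finset.sum_congr rfl fun j _ => by ring
    rw [hsplit] at h
    obtain ⟨hr0, hs0⟩ := eq_zero_and_eq_zero_of_X_pow_card_dvd hF hf0 hf hd (hr 0) (hs 0)
      ((dvd_add_left (dvd_mul_right _ _)).mp (h ▸ dvd_zero _))
    have htail : stepanovPoly f (fun j => r j.succ) (fun j => s j.succ) = 0 := by
      simpa [hr0, hs0] using h
    exact Fin.cases ⟨hr0, hs0⟩ (ih (fun j => hr j.succ) (fun j => hs j.succ) htail) j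

lemma natDegree_stepanovPoly_le (f : F[X]) {d J : ℕ} {r s : Fin J → F[X]}
    (hr : ∀ j, r j ∈ degreeLT F d) (hs : ∀ j, s j ∈ degreeLT F d) :
    (stepanovPoly f r s).natDegree
      ≤ d + Fintype.card F / 2 * f.natDegree + (J - 1) * Fintype.card F := by
  have hdeg {g : F[X]} (hg : g ∈ degreeLT F d) : g.natDegree ≤ d :=
    natDegree_le_of_degree_le (mem_degreeLT.mp hg).le
  refine natDegree_sum_le_of_forall_le _ _ fun j _ => natDegree_mul_le.trans (add_le_add ?_ ?_)
  · refine natDegree_add_le_of_degree_le ((hdeg (hr j)).trans (Nat.le_add_right _ _)) ?_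
    exact natDegree_mul_le.trans (add_le_add (hdeg (hs j)) natDegree_pow_le)
  · rw [natDegree_X_pow]
    exact Nat.mul_le_mul_right _ (by omega)

lemma iterate_derivative_pow_mul_stepanovPoly (f : F[X]) {J : ℕ} (r s : Fin J → F[X])
    {k l : ℕ} (hkl : k ≤ l) :
    derivative^[k] (f ^ l * stepanovPoly f r s) = f ^ (l - k) * ∑ j,
      (iterTwistedDerivative f 0 l k (r j) + iterTwistedDerivative f ((Fintype.card F / 2 : ℕ) : F)
        l k (s j) * f ^ (Fintype.card F / 2)) * X ^ (j * Fintype.card F) := by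
  have hX (j : ℕ) : derivative (X ^ (j * Fintype.card F) : F[X]) = 0 := by simp [derivative_X_pow]
  have hG (j : ℕ) : f * derivative (f ^ (Fintype.card F / 2) * X ^ (j * Fintype.card F))
      = C ((Fintype.card F / 2 : ℕ) : F) * derivative f
        * (f ^ (Fintype.card F / 2) * X ^ (j * Fintype.card F)) := by
    obtain ⟨n, hn⟩ : ∃ n, Fintype.card F / 2 = n + 1 :=
      Nat.exists_eq_add_one.mpr (Nat.div_pos Fintype.one_lt_card two_pos)
    rw [derivative_mul, hX, derivative_pow, hn]
    simp only [Nat.add_sub_cancel]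
    ring
  simp only [stepanovPoly, Finset.mul_sum, iterate_derivative_sum]
  refine Finset.sum_congr rfl fun j _ => ?_
  rw [show f ^ l * ((r j + s j * f ^ (Fintype.card F / 2)) * X ^ (j * Fintype.card F))
      = f ^ l * r j * X ^ (j * Fintype.card F)
        + f ^ l * s j * (f ^ (Fintype.card F / 2) * X ^ (j * Fintype.card F)) by ring,
    iterate_map_add, iterate_derivative_pow_mul_mul (c := 0) (by simp [hX]) _ hkl,
    iterate_derivative_pow_mul_mul (hG j) _ hkl]
  ring

lemma le_rootMultiplicity_pow_mul_stepanovPoly {f : F[X]} {a : F} {J l : ℕ} {r s : Fin J → F[X]}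
    (hl : l ≤ ringChar F) (h0 : f ^ l * stepanovPoly f r s ≠ 0)
    (hsys : ∀ k < l, ∑ j, (iterTwistedDerivative f 0 l k (r j)
      + C a * iterTwistedDerivative f ((Fintype.card F / 2 : ℕ) : F) l k (s j)) * X ^ (j : ℕ) = 0)
    {x : F} (hx : f.eval x ^ (Fintype.card F / 2) = a) :
    l ≤ (f ^ l * stepanovPoly f r s).rootMultiplicity x := by
  rcases l with _ | n
  · exact Nat.zero_le _
  have hroot : ∀ k ≤ n, (derivative^[k] (f ^ (n + 1) * stepanovPoly f r s)).IsRoot x := by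
    intro k hk
    have hsys_x := congrArg (eval x) (hsys k (by omega))
    rw [IsRoot, iterate_derivative_pow_mul_stepanovPoly f r s (by omega), eval_mul]
    refine mul_eq_zero_of_right _ (Eq.trans ?_ (hsys_x.trans eval_zero))
    simp only [eval_finsetSum, eval_mul, eval_add, eval_pow, eval_X, eval_C, hx, mul_comm _ a,
      mul_comm _ (Fintype.card F), pow_mul, FiniteField.pow_card]
  refine lt_rootMultiplicity_of_isRoot_iterate_derivative_of_mem_nonZeroDivisors h0 hroot ?_
  have hp : (ringChar F).Prime := CharP.char_is_prime F _
  rw [mem_nonZeroDivisors_iff_ne_zero, Ne, ringChar.spec, hp.dvd_factorial]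
  omega

end Stepanov

section CharacterSums

open Polynomial

variable {F : Type*} [Field F] [Fintype F] [DecidableEq F]

lemma mul_card_eval_pow_eq_le (hF : ringChar F ≠ 2) {f : F[X]} (hf0 : f.eval 0 ≠ 0)
    (hf : ∀ c t, f ≠ C c * t ^ 2) {d J l : ℕ} (hd : 2 * d + f.natDegree ≤ Fintype.card F + 1)
    (hl : l ≤ ringChar F) (hcount : l * (d + l * f.natDegree + J) < 2 * (J * d)) (a : F) :
    l * ({x | f.eval x ^ (Fintype.card F / 2) = a} : Finset F).card ≤
      l * f.natDegree + (d + Fintype.card F / 2 * f.natDegree + (J - 1) * Fintype.card F) := by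
  obtain ⟨r, s, hr, hs, hne, hsys⟩ :=
    exists_stepanov_coefficients f a ((Fintype.card F / 2 : ℕ) : F) hcount
  have hP : stepanovPoly f r s ≠ 0 := fun h =>
    hne (coefficients_eq_zero_of_stepanovPoly_eq_zero hF hf0 hf hd hr hs h)
  have hfl : f ^ l ≠ 0 := pow_ne_zero l (by rintro rfl; simp at hf0)
  calc l * ({x | f.eval x ^ (Fintype.card F / 2) = a} : Finset F).card
      ≤ (f ^ l * stepanovPoly f r s).natDegree := by
        rw [mul_comm]
        exact card_mul_le_natDegree_of_le_rootMultiplicity fun x hx =>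
          le_rootMultiplicity_pow_mul_stepanovPoly hl (mul_ne_zero hfl hP) hsys
            (Finset.mem_filter.mp hx).2
    _ ≤ _ := natDegree_mul_le.trans
        (add_le_add natDegree_pow_le (natDegree_stepanovPoly_le f hr hs))

lemma sum_quadraticChar_comp {X : Type*} [Fintype X] (hF : ringChar F ≠ 2) (g : X → F) :
    ∑ x, quadraticChar F (g x) = ({x | g x ^ (Fintype.card F / 2) = 1} : Finset X).card
      - (({x | g x ^ (Fintype.card F / 2) = -1} : Finset X).card : ℤ) := by
  have hpt (x : X) : quadraticChar F (g x) =
      (if g x ^ (Fintype.card F / 2) = 1 then 1 else 0)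
        - if g x ^ (Fintype.card F / 2) = -1 then 1 else 0 := by
    have hpos : Fintype.card F / 2 ≠ 0 := (Nat.div_pos Fintype.one_lt_card two_pos).ne'
    have hne := Ring.neg_one_ne_one_of_char_ne_two hF
    by_cases h0 : g x = 0
    · simp [h0, hpos]
    · rcases FiniteField.pow_dichotomy hF h0 with h | h <;>
        simp [quadraticChar_eq_pow_of_char_ne_two hF h0, h, hne, hne.symm]
  simp only [hpt, Finset.sum_sub_distrib, Finset.sum_boole]

lemma card_le_card_pow_eq_one_add_card_pow_eq_neg_one_add_card_eq_zero {X : Type*} [Fintype X]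
    (hF : ringChar F ≠ 2) (g : X → F) :
    Fintype.card X ≤ ({x | g x ^ (Fintype.card F / 2) = 1} : Finset X).card
      + ({x | g x ^ (Fintype.card F / 2) = -1} : Finset X).card
      + ({x | g x = 0} : Finset X).card := by
  classical
  rw [← Finset.card_univ]
  refine (Finset.card_le_card fun x _ => ?_).trans
    ((Finset.card_union_le _ _).trans (Nat.add_le_add_right (Finset.card_union_le _ _) _))
  simp only [Finset.mem_union, Finset.mem_filter_univ]
  by_cases h0 : g x = 0
  · exact Or.inr h0
  · exact Or.inl (FiniteField.pow_dichotomy hF h0)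

lemma card_eval_eq_zero_le_natDegree {f : F[X]} (hf : f ≠ 0) :
    ({x | f.eval x = 0} : Finset F).card ≤ f.natDegree := by
  refine (Finset.card_le_card fun x hx => ?_).trans
    ((Multiset.toFinset_card_le f.roots).trans (card_roots' f))
  simpa [hf] using hx

lemma two_mul_mul_abs_sum_quadraticChar_eval_le (hF : ringChar F ≠ 2) {f : F[X]}
    (hf0 : f.eval 0 ≠ 0) (hf : ∀ c t, f ≠ C c * t ^ 2) {d L : ℕ}
    (hd : 2 * d + f.natDegree ≤ Fintype.card F + 1) (hL : 2 * L ≤ ringChar F)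
    (hLd : L * (2 * L * f.natDegree + L + 1) < d) :
    2 * (L : ℤ) * |∑ x, quadraticChar F (f.eval x)|
      ≤ 6 * L * f.natDegree + (f.natDegree + 1) * Fintype.card F + 1 := by
  have hne : f ≠ 0 := by rintro rfl; simp at hf0
  have hcount : 2 * L * (d + 2 * L * f.natDegree + (L + 1)) < 2 * ((L + 1) * d) := by linarith
  have hN₁ := mul_card_eval_pow_eq_le hF hf0 hf hd hL hcount 1
  have hN₂ := mul_card_eval_pow_eq_le hF hf0 hf hd hL hcount (-1)
  have hN := card_le_card_pow_eq_one_add_card_pow_eq_neg_one_add_card_eq_zero hF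
    fun x => f.eval x
  have hN₀ := card_eval_eq_zero_le_natDegree hne
  have hq : 2 * (Fintype.card F / 2) ≤ Fintype.card F := Nat.mul_div_le _ _
  rw [sum_quadraticChar_comp hF]
  generalize ({x | f.eval x ^ (Fintype.card F / 2) = 1} : Finset F).card = N₁ at *
  generalize ({x | f.eval x ^ (Fintype.card F / 2) = -1} : Finset F).card = N₂ at *
  have hLN : 2 * L * Fintype.card F ≤ 2 * L * N₁ + 2 * L * N₂ + 2 * L * f.natDegree := by
    rw [← mul_add, ← mul_add]
    gcongr
    omega
  have hqm := Nat.mul_le_mul_right f.natDegree hq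
  rw [Nat.add_sub_cancel] at hN₁ hN₂
  zify at hN₁ hN₂ hLN hqm hd
  rcases abs_cases ((N₁ : ℤ) - N₂) with ⟨h, -⟩ | ⟨h, -⟩ <;> rw [h] <;> linarith

end CharacterSums

lemma le_of_two_mul_sqrt_div_mul_le {m p : ℕ} (hp : 64 * (m + 1) ^ 2 ≤ p) {T : ℝ}
    (hT : 2 * ((p.sqrt / (4 * (m + 1)) : ℕ) : ℝ) * T
      ≤ 6 * (p.sqrt / (4 * (m + 1)) : ℕ) * m + (m + 1) * p + 1) :
    T ≤ 40 * (m + 1) ^ 2 * √p := by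
  have hL1 : 1 ≤ p.sqrt / (4 * (m + 1)) := by
    rw [Nat.one_le_div_iff (by omega), Nat.le_sqrt]
    nlinarith
  have hqL := Nat.lt_mul_div_succ p.sqrt (show 0 < 4 * (m + 1) by omega)
  have hLq : p.sqrt / (4 * (m + 1)) ≤ p.sqrt := Nat.div_le_self _ _
  generalize p.sqrt / (4 * (m + 1)) = L at *
  have hL1' : (1 : ℝ) ≤ L := by exact_mod_cast hL1
  have hS1 : 1 ≤ √p := hL1'.trans ((Nat.cast_le.mpr hLq).trans Real.nat_sqrt_le_real_sqrt)
  have hSL : √p ≤ 8 * (m + 1) * L := by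
    have : (p.sqrt : ℝ) + 1 ≤ 4 * (m + 1) * (L + 1) := by exact_mod_cast hqL
    have := Real.real_sqrt_le_nat_sqrt_succ (a := p)
    nlinarith
  have hm : (m : ℝ) ≤ (m + 1) ^ 2 := by nlinarith [Nat.cast_nonneg (α := ℝ) m]
  have hm1 : (1 : ℝ) ≤ (m + 1) ^ 2 := by nlinarith [Nat.cast_nonneg (α := ℝ) m]
  refine le_of_mul_le_mul_left (hT.trans ?_) (by positivity : (0 : ℝ) < 2 * L)
  calc 6 * (L : ℝ) * m + (m + 1) * p + 1
      = 6 * L * (m * 1) + (m + 1) * (√p * √p) + 1 * 1 * 1 := by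
        rw [Real.mul_self_sqrt p.cast_nonneg]; ring
    _ ≤ 6 * L * ((m + 1) ^ 2 * √p) + (m + 1) * (8 * (m + 1) * L * √p)
        + L * (m + 1) ^ 2 * √p := by gcongr
    _ = 15 * (L * (m + 1) ^ 2 * √p) := by ring
    _ ≤ 80 * (L * (m + 1) ^ 2 * √p) := by gcongr; norm_num
    _ = 2 * L * (40 * (m + 1) ^ 2 * √p) := by ring

section CharacterSumsPrime

open Polynomial

variable {p : ℕ} [Fact p.Prime]

lemma abs_sum_quadraticChar_comp_le_card {F X : Type*} [Field F] [Fintype F] [DecidableEq F]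
    [Fintype X] (g : X → F) : |∑ x, quadraticChar F (g x)| ≤ Fintype.card X := by
  calc |∑ x, quadraticChar F (g x)| ≤ ∑ x, |quadraticChar F (g x)| :=
        Finset.abs_sum_le_sum_abs _ _
    _ ≤ ∑ _x : X, 1 := by
        gcongr with x
        rcases quadraticChar_isQuadratic F (g x) with h | h | h <;> simp [h]
    _ = Fintype.card X := by simp

lemma abs_sum_quadraticChar_eval_le_of_eval_zero_ne_zero {f : (ZMod p)[X]}
    (hf0 : f.eval 0 ≠ 0) (hf : ∀ c t, f ≠ C c * t ^ 2)
    (hp : 64 * (f.natDegree + 1) ^ 2 ≤ p) :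
    |((∑ x, quadraticChar (ZMod p) (f.eval x) : ℤ) : ℝ)| ≤ 40 * (f.natDegree + 1) ^ 2 * √p := by
  have hchar : ringChar (ZMod p) = p := ZMod.ringChar_zmod_n p
  have hm : 64 * (f.natDegree + 1) ≤ p := by nlinarith
  have hbound := two_mul_mul_abs_sum_quadraticChar_eval_le (by rw [hchar]; omega) hf0 hf
    (d := (p + 1 - f.natDegree) / 2) (L := p.sqrt / (4 * (f.natDegree + 1)))
  have hLq : 4 * (f.natDegree + 1) * (p.sqrt / (4 * (f.natDegree + 1))) ≤ p.sqrt :=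
    Nat.mul_div_le _ _
  have hLp := (Nat.mul_le_mul hLq hLq).trans (Nat.sqrt_le p)
  rw [ZMod.card, hchar] at hbound
  refine le_of_two_mul_sqrt_div_mul_le hp ?_
  generalize p.sqrt / (4 * (f.natDegree + 1)) = L at *
  have hL : L ≤ L * L := Nat.le_mul_self L
  refine mod_cast hbound (by omega) ?_ ?_
  · refine le_trans ?_ hLp
    nlinarith [Nat.zero_le (L * L * f.natDegree), Nat.zero_le (L * L * f.natDegree ^ 2)]
  have h16 : 8 * (L * (2 * L * f.natDegree + L + 1)) ≤ p := by
    refine le_trans ?_ hLp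
    nlinarith [Nat.zero_le (L * L * f.natDegree), Nat.zero_le (L * L * f.natDegree ^ 2)]
  omega

/-- Stepanov's method in the range `64 (deg f + 1)² ≤ p`; the remaining primes are trivial. -/
lemma abs_sum_quadraticChar_eval_le {f : (ZMod p)[X]} (hf : ∀ c t, f ≠ C c * t ^ 2) :
    |((∑ x, quadraticChar (ZMod p) (f.eval x) : ℤ) : ℝ)| ≤ 40 * (f.natDegree + 1) ^ 2 * √p := by
  rcases le_or_gt (64 * (f.natDegree + 1) ^ 2) p with hp | hp
  · obtain ⟨c, hc⟩ : ∃ c, f.eval c ≠ 0 := by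
      refine exists_eval_ne_zero_of_natDegree_lt_card f (by rintro rfl; exact hf 0 0 (by simp)) ?_
      rw [Cardinal.mk_fintype, ZMod.card]
      norm_cast
      nlinarith
    have hdeg : (f.comp (X + C c)).natDegree = f.natDegree := by simp [natDegree_comp]
    have hcomp : ∀ a t, f.comp (X + C c) ≠ C a * t ^ 2 := by
      intro a t h
      refine hf a (t.comp (X - C c)) ?_
      calc f = (f.comp (X + C c)).comp (X - C c) := by simp [comp_assoc]
        _ = C a * t.comp (X - C c) ^ 2 := by simp [h]
    have hbound := abs_sum_quadraticChar_eval_le_of_eval_zero_ne_zero (by simpa using hc) hcomp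
      (by rwa [hdeg])
    rw [hdeg] at hbound
    rw [← Equiv.sum_comp (Equiv.addRight c)]
    simpa using hbound
  · have hp' : √(p : ℝ) ≤ 8 * (f.natDegree + 1) := by
      refine Real.sqrt_le_iff.mpr ⟨by positivity, ?_⟩
      have : (p : ℝ) ≤ 64 * (f.natDegree + 1) ^ 2 := by exact_mod_cast hp.le
      linarith
    calc |((∑ x, quadraticChar (ZMod p) (f.eval x) : ℤ) : ℝ)| ≤ p := by
          have := abs_sum_quadraticChar_comp_le_card (f.eval ·)
          rw [ZMod.card] at this
          exact_mod_cast this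
      _ = √p * √p := (Real.mul_self_sqrt p.cast_nonneg).symm
      _ ≤ 8 * (f.natDegree + 1) * √p := by gcongr
      _ ≤ 40 * (f.natDegree + 1) ^ 2 * √p := by
          gcongr ?_ * √_
          nlinarith [Nat.cast_nonneg (α := ℝ) f.natDegree]

lemma even_rootMultiplicity_C_mul_sq {R : Type*} [CommRing R] [IsDomain R] {c : R} {t : R[X]}
    (h : C c * t ^ 2 ≠ 0) (x : R) : Even ((C c * t ^ 2).rootMultiplicity x) := by
  rw [rootMultiplicity_mul h, rootMultiplicity_C, zero_add, sq,
    rootMultiplicity_mul (sq t ▸ right_ne_zero_of_mul h)]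
  exact ⟨_, rfl⟩

lemma rootMultiplicity_prod_X_add_C {R κ : Type*} [CommRing R] [IsDomain R] [DecidableEq R]
    [Fintype κ] (n : κ → R) (b : R) :
    (∏ i, (X + C (n i))).rootMultiplicity (-b) = ({i | n i = b} : Finset κ).card := by
  have hprod : ∏ i, (X + C (n i)) = (Multiset.map (fun a => X - C a)
      (Finset.univ.val.map fun i => -n i)).prod := by
    simp [Multiset.map_map]
  rw [← count_roots, hprod, roots_multiset_prod_X_sub_C, Multiset.count_map]
  simp [Finset.card, eq_comm]

lemma abs_sum_prod_quadraticChar_add_le {κ : Type*} [Fintype κ] (n : κ → ZMod p) {b : ZMod p}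
    (hb : Odd ({i | n i = b} : Finset κ).card) :
    |((∑ x, ∏ i, quadraticChar (ZMod p) (x + n i) : ℤ) : ℝ)|
      ≤ 40 * (Fintype.card κ + 1) ^ 2 * √p := by
  have hf : ∀ c t, (∏ i, (X + C (n i)) : (ZMod p)[X]) ≠ C c * t ^ 2 := by
    intro c t h
    have h0 : (∏ i, (X + C (n i)) : (ZMod p)[X]) ≠ 0 :=
      Finset.prod_ne_zero_iff.mpr fun i _ => X_add_C_ne_zero (n i)
    refine Nat.not_even_iff_odd.mpr hb ?_
    rw [← rootMultiplicity_prod_X_add_C, h]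
    exact even_rootMultiplicity_C_mul_sq (h ▸ h0) _
  have hdeg : (∏ i, (X + C (n i)) : (ZMod p)[X]).natDegree = Fintype.card κ := by
    simp [natDegree_prod_of_monic _ _ fun i _ => monic_X_add_C (n i)]
  simpa [hdeg, eval_prod] using abs_sum_quadraticChar_eval_le hf

end CharacterSumsPrime

section Moments

open Finset BigOperators

variable {ι κ : Type*} [Fintype κ] {p : ℕ} [Fact p.Prime]

/-- The sum `∑ j, χ_p(x + a j)` of the quadratic character over the translates of `x` by the
family `a`, as a random variable on `ZMod p` with the uniform distribution. -/
noncomputable def shiftSum [Fintype ι] (a : ι → ZMod p) (x : ZMod p) : ℝ :=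
  ∑ j, (quadraticChar (ZMod p) (x + a j) : ℝ)

/-- The sum of the independent signs `ε j`, for `ε : ι → ℤˣ` uniformly distributed. It is the
model for `shiftSum`. -/
def rademacherSum [Fintype ι] (ε : ι → ℤˣ) : ℝ :=
  ∑ j, ((ε j : ℤ) : ℝ)

lemma prod_comp_eq_one_of_even_card_fiber [DecidableEq ι] {M : Type*} [CommMonoid M]
    {t : κ → ι} {u : ι → M} (hu : ∀ i, u (t i) ^ 2 = 1) (ht : ∀ j, Even #{i | t i = j}) :
    ∏ i, u (t i) = 1 := by
  rw [prod_comp]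
  refine prod_eq_one fun j hj => ?_
  obtain ⟨i, -, rfl⟩ := mem_image.mp hj
  obtain ⟨c, hc⟩ := even_iff_exists_two_mul.mp (ht (t i))
  rw [hc, pow_mul, hu, one_pow]

lemma expect_prod_units_eq_one_of_even_card_fiber [Fintype ι] [DecidableEq ι] {t : κ → ι}
    (ht : ∀ j, Even #{i | t i = j}) :
    𝔼 ε : ι → ℤˣ, ∏ i, ((ε (t i) : ℤ) : ℝ) = 1 := by
  have hprod (ε : ι → ℤˣ) : ∏ i, ((ε (t i) : ℤ) : ℝ) = 1 :=
    prod_comp_eq_one_of_even_card_fiber (u := fun j => ((ε j : ℤ) : ℝ))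
      (fun i => by simp [← Int.cast_pow, ← Units.val_pow_eq_pow_val]) ht
  simp only [hprod, expect_const univ_nonempty]

lemma expect_prod_units_eq_zero_of_odd_card_fiber [Fintype ι] [DecidableEq ι]
    {t : κ → ι} {j : ι} (hj : Odd #{i | t i = j}) : 𝔼 ε : ι → ℤˣ, ∏ i, ((ε (t i) : ℤ) : ℝ) = 0 := by
  have hflip (ε : ι → ℤˣ) : ∏ i, ((ε (t i) : ℤ) : ℝ)
      = -∏ i, (((Pi.mulSingle j (-1) * ε : ι → ℤˣ) (t i) : ℤ) : ℝ) := by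
    have hsign : ∏ i, (((Pi.mulSingle j (-1) : ι → ℤˣ) (t i) : ℤ) : ℝ) = -1 := by
      simp [Pi.mulSingle_apply, apply_ite, prod_ite, hj.neg_one_pow]
    simp [prod_mul_distrib, hsign]
  have hneg : 𝔼 ε : ι → ℤˣ, ∏ i, ((ε (t i) : ℤ) : ℝ)
      = -𝔼 ε : ι → ℤˣ, ∏ i, ((ε (t i) : ℤ) : ℝ) := by
    rw [← expect_neg_distrib]
    exact Fintype.expect_equiv (Equiv.mulLeft (Pi.mulSingle j (-1))) _ _ hflip
  linarith

lemma abs_expect_prod_quadraticChar_sub_one_le [DecidableEq ι] (a : ι → ZMod p) {t : κ → ι}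
    (ht : ∀ j, Even #{i | t i = j}) :
    |𝔼 x, ∏ i, (quadraticChar (ZMod p) (x + a (t i)) : ℝ) - 1| ≤ Fintype.card κ / p := by
  classical
  let B : Finset (ZMod p) := univ.image fun i => -a (t i)
  have hprod (x : ZMod p) :
      ∏ i, (quadraticChar (ZMod p) (x + a (t i)) : ℝ) = 1 - if x ∈ B then 1 else 0 := by
    have hmem : x ∈ B ↔ ∃ i, x + a (t i) = 0 := by
      simp [B, neg_eq_iff_add_eq_zero, add_comm]
    by_cases hx : x ∈ B
    · obtain ⟨i, hi⟩ := hmem.mp hx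
      rw [if_pos hx, sub_self]
      exact prod_eq_zero (mem_univ i) (by simp [hi])
    · rw [if_neg hx, sub_zero]
      have hsq (i : κ) : quadraticChar (ZMod p) (x + a (t i)) ^ 2 = 1 :=
        quadraticChar_sq_one fun h => hx (hmem.mpr ⟨i, h⟩)
      exact_mod_cast prod_comp_eq_one_of_even_card_fiber
        (u := fun j => quadraticChar (ZMod p) (x + a j)) hsq ht
  have hB : (#B : ℝ) ≤ Fintype.card κ := by exact_mod_cast card_image_le
  simp only [hprod, expect_sub_distrib, expect_const univ_nonempty, sub_sub_cancel_left, abs_neg,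
    Fintype.expect_eq_sum_div_card, sum_boole, ZMod.card, filter_mem_eq_inter, univ_inter]
  rw [abs_of_nonneg (by positivity)]
  gcongr

lemma abs_expect_prod_quadraticChar_sub_expect_prod_units_le [Fintype ι] [DecidableEq ι]
    {a : ι → ZMod p} (ha : a.Injective) (t : κ → ι) :
    |𝔼 x, ∏ i, (quadraticChar (ZMod p) (x + a (t i)) : ℝ)
        - 𝔼 ε : ι → ℤˣ, ∏ i, ((ε (t i) : ℤ) : ℝ)| ≤ 40 * (Fintype.card κ + 1) ^ 2 / √p := by
  have hp : (0 : ℝ) < p := Nat.cast_pos.mpr (NeZero.pos p)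
  have hp1 : (1 : ℝ) ≤ p := Nat.one_le_cast.mpr (NeZero.pos p)
  by_cases ht : ∀ j, Even #{i | t i = j}
  · rw [expect_prod_units_eq_one_of_even_card_fiber ht]
    calc |𝔼 x, ∏ i, (quadraticChar (ZMod p) (x + a (t i)) : ℝ) - 1| ≤ Fintype.card κ / p :=
          abs_expect_prod_quadraticChar_sub_one_le a ht
      _ ≤ 40 * (Fintype.card κ + 1) ^ 2 / √p := by
          gcongr
          · nlinarith [Nat.cast_nonneg (α := ℝ) (Fintype.card κ)]
          · exact Real.sqrt_le_self_iff.mpr (Or.inr hp1)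
  · simp only [not_forall, Nat.not_even_iff_odd] at ht
    obtain ⟨j, hj⟩ := ht
    have hb : Odd #{i | a (t i) = a j} := by simpa only [ha.eq_iff] using hj
    rw [expect_prod_units_eq_zero_of_odd_card_fiber hj, sub_zero,
      Fintype.expect_eq_sum_div_card, ZMod.card, abs_div, abs_of_pos hp,
      div_le_div_iff₀ hp (by positivity)]
    calc |∑ x, ∏ i, (quadraticChar (ZMod p) (x + a (t i)) : ℝ)| * √p
        ≤ 40 * (Fintype.card κ + 1) ^ 2 * √p * √p := by
          gcongr
          exact_mod_cast abs_sum_prod_quadraticChar_add_le (fun i => a (t i)) hb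
      _ = 40 * (Fintype.card κ + 1) ^ 2 * p := by rw [mul_assoc, Real.mul_self_sqrt hp.le]

lemma abs_expect_shiftSum_pow_sub_expect_rademacherSum_pow_le [Fintype ι] [DecidableEq ι]
    {a : ι → ZMod p} (ha : a.Injective) (k : ℕ) :
    |𝔼 x, shiftSum a x ^ k - 𝔼 ε : ι → ℤˣ, rademacherSum ε ^ k|
      ≤ Fintype.card ι ^ k * (40 * (k + 1) ^ 2 / √p) := by
  simp only [shiftSum, rademacherSum, Fintype.sum_pow, expect_sum_comm]
  rw [← sum_sub_distrib]
  calc |∑ t : Fin k → ι, _| ≤ ∑ t : Fin k → ι, _ := abs_sum_le_sum_abs _ _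
    _ ≤ ∑ _t : Fin k → ι, 40 * ((k : ℝ) + 1) ^ 2 / √p := by
        gcongr with t
        simpa using abs_expect_prod_quadraticChar_sub_expect_prod_units_le ha t
    _ = Fintype.card ι ^ k * (40 * (k + 1) ^ 2 / √p) := by simp

end Moments

section CharacteristicFunctions

open Finset BigOperators Complex

lemma hasDerivAt_sum_range_succ_pow_div_factorial (K : ℕ) (z : ℂ) :
    HasDerivAt (fun w : ℂ => ∑ k ∈ range (K + 1), w ^ k / (k.factorial : ℂ))
      (∑ k ∈ range K, z ^ k / (k.factorial : ℂ)) z := by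
  have h := HasDerivAt.fun_sum (u := range (K + 1)) fun k _ =>
    (hasDerivAt_pow k z).div_const (k.factorial : ℂ)
  rw [sum_range_succ'] at h
  refine h.congr_deriv ?_
  simp only [Nat.cast_zero, zero_mul, zero_div, add_zero, Nat.factorial_succ, Nat.add_sub_cancel,
    Nat.cast_mul]
  exact sum_congr rfl fun k _ => mul_div_mul_left _ _ (Nat.cast_ne_zero.mpr k.succ_ne_zero)

lemma norm_exp_sub_sum_range_le_of_re_nonpos {z : ℂ} (hz : z.re ≤ 0) (K : ℕ) :
    ‖exp z - ∑ k ∈ range K, z ^ k / (k.factorial : ℂ)‖ ≤ ‖z‖ ^ K / K.factorial := by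
  induction K generalizing z with
  | zero => simpa [norm_exp] using hz
  | succ K ih =>
    have hderiv (x : ℝ) : HasDerivAt (fun x : ℝ => exp (x * z)
        - ∑ k ∈ range (K + 1), (x * z) ^ k / (k.factorial : ℂ))
        (z * (exp (x * z) - ∑ k ∈ range K, (x * z) ^ k / (k.factorial : ℂ))) x := by
      have hline : HasDerivAt (fun x : ℝ => x * z) z x := by
        simpa using (ofRealCLM.hasDerivAt (x := x)).mul_const z
      exact ((hasDerivAt_exp _).sub (hasDerivAt_sum_range_succ_pow_div_factorial K _)).scomp x hline
    have hbound (x : ℝ) : HasDerivAt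
        (fun x : ℝ => (x * ‖z‖) ^ (K + 1) / ((K + 1).factorial : ℝ))
        (‖z‖ * ((x * ‖z‖) ^ K / K.factorial)) x := by
      refine (((hasDerivAt_mul_const ‖z‖).pow (K + 1)).div_const _).congr_deriv ?_
      rw [Nat.factorial_succ, Nat.add_sub_cancel]
      push_cast
      field_simp
    have := image_norm_le_of_norm_deriv_right_le_deriv_boundary (a := 0) (b := 1)
      (fun x _ => (hderiv x).continuousAt.continuousWithinAt)
      (fun x _ => (hderiv x).hasDerivWithinAt) (by simp [sum_range_succ']) hbound
      (fun x hx => ?_) (Set.right_mem_Icc.mpr zero_le_one)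
    · simpa using this
    · rw [norm_mul]
      have hx' : ((x : ℂ) * z).re ≤ 0 := by
        simpa using mul_nonpos_of_nonneg_of_nonpos hx.1 hz
      have := ih hx'
      rw [norm_mul, norm_real, Real.norm_of_nonneg hx.1] at this
      gcongr

variable {Ω Ω' : Type*} [Fintype Ω] [Fintype Ω']

lemma norm_expect_exp_mul_I_sub_sum_le (X : Ω → ℝ) {K : ℕ} (hK : Even K) :
    ‖𝔼 x, exp (X x * I) - ∑ k ∈ range K, I ^ k / (k.factorial : ℂ) * (𝔼 x, X x ^ k : ℝ)‖
      ≤ (𝔼 x, X x ^ K) / K.factorial := by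
  have hmoments : ∑ k ∈ range K, I ^ k / (k.factorial : ℂ) * (𝔼 x, X x ^ k : ℝ)
      = 𝔼 x, ∑ k ∈ range K, (X x * I) ^ k / (k.factorial : ℂ) := by
    rw [expect_sum_comm]
    refine sum_congr rfl fun k _ => ?_
    rw [ofReal_expect, mul_expect]
    refine expect_congr rfl fun x _ => ?_
    rw [ofReal_pow, mul_pow]
    ring
  rw [hmoments, ← expect_sub_distrib, expect_div]
  refine (RCLike.norm_expect_le (K := ℂ)).trans (expect_le_expect fun x _ => ?_)
  refine (norm_exp_sub_sum_range_le_of_re_nonpos (by simp) K).trans_eq ?_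
  rw [norm_mul, norm_I, mul_one, norm_real, Real.norm_eq_abs, hK.pow_abs]

/-- Both characteristic functions are compared with their Taylor polynomials; the `K`-th moment of
`X` in the remainder is itself within the bound of that of `Y`. -/
lemma norm_expect_exp_mul_I_sub_expect_exp_mul_I_le (X : Ω → ℝ) (Y : Ω' → ℝ) {K : ℕ}
    (hK : Even K) :
    ‖𝔼 x, exp (X x * I) - 𝔼 y, exp (Y y * I)‖
      ≤ ∑ k ∈ range (K + 1), |𝔼 x, X x ^ k - 𝔼 y, Y y ^ k| / k.factorial
        + 2 * ((𝔼 y, Y y ^ K) / K.factorial) := by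
  let T (μ : ℕ → ℝ) : ℂ := ∑ k ∈ range K, I ^ k / (k.factorial : ℂ) * (μ k : ℝ)
  let μX (k : ℕ) : ℝ := 𝔼 x, X x ^ k
  let μY (k : ℕ) : ℝ := 𝔼 y, Y y ^ k
  have hX : ‖𝔼 x, exp (X x * I) - T μX‖ ≤ μX K / K.factorial :=
    norm_expect_exp_mul_I_sub_sum_le X hK
  have hY : ‖𝔼 y, exp (Y y * I) - T μY‖ ≤ μY K / K.factorial :=
    norm_expect_exp_mul_I_sub_sum_le Y hK
  have hT : ‖T μX - T μY‖ ≤ ∑ k ∈ range K, |μX k - μY k| / k.factorial := by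
    rw [← sum_sub_distrib]
    refine (norm_sum_le _ _).trans (sum_le_sum fun k _ => le_of_eq ?_)
    rw [← mul_sub, norm_mul, ← ofReal_sub, norm_real, norm_div, norm_pow, norm_I, one_pow,
      norm_natCast, Real.norm_eq_abs, one_div_mul_eq_div]
  have hK' : μX K / K.factorial ≤ |μX K - μY K| / K.factorial + μY K / K.factorial := by
    rw [← add_div]
    gcongr
    linarith [le_abs_self (μX K - μY K)]
  calc ‖𝔼 x, exp (X x * I) - 𝔼 y, exp (Y y * I)‖
      = ‖(𝔼 x, exp (X x * I) - T μX) + (T μX - T μY) - (𝔼 y, exp (Y y * I) - T μY)‖ := by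
        congr 1; ring
    _ ≤ μX K / K.factorial + ∑ k ∈ range K, |μX k - μY k| / k.factorial
        + μY K / K.factorial :=
        (norm_sub_le _ _).trans (add_le_add ((norm_add_le _ _).trans (add_le_add hX hT)) hY)
    _ ≤ ∑ k ∈ range (K + 1), |μX k - μY k| / k.factorial + 2 * (μY K / K.factorial) := by
        rw [sum_range_succ]
        linarith

lemma pow_div_factorial_le_two_mul_cosh {K : ℕ} (hK : Even K) (y : ℝ) :
    y ^ K / K.factorial ≤ 2 * Real.cosh (2 * y) / 2 ^ K := by
  calc y ^ K / K.factorial = (2 * |y|) ^ K / K.factorial / 2 ^ K := by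
        rw [mul_pow, hK.pow_abs]
        field_simp
    _ ≤ Real.exp (2 * |y|) / 2 ^ K := by
        gcongr
        exact Real.pow_div_factorial_le_exp _ (by positivity) K
    _ ≤ 2 * Real.cosh (2 * y) / 2 ^ K := by
        gcongr
        rw [← Real.cosh_abs (2 * y), abs_mul, Nat.abs_ofNat, Real.cosh_eq]
        linarith [Real.exp_pos (-(2 * |y|))]

variable {ι : Type*} [Fintype ι]

lemma expect_exp_mul_rademacherSum [DecidableEq ι] (z : ℂ) :
    𝔼 ε : ι → ℤˣ, exp (z * rademacherSum ε) = cosh z ^ Fintype.card ι := by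
  have hprod (ε : ι → ℤˣ) : exp (z * rademacherSum ε) = ∏ j, exp (z * (ε j : ℤ)) := by
    rw [rademacherSum, ofReal_sum, mul_sum, exp_sum]
    simp only [ofReal_intCast]
  simp only [hprod, Fintype.expect_eq_sum_div_card]
  rw [← Fintype.prod_sum fun (_ : ι) (u : ℤˣ) => exp (z * ((u : ℤ) : ℂ)), prod_const,
    Fintype.card_fun, Fintype.card_units_int, Nat.cast_pow, card_univ, ← div_pow, UnitsInt.univ,
    sum_pair (by decide), cosh]
  simp

lemma expect_cosh_mul_rademacherSum [DecidableEq ι] (s : ℝ) :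
    𝔼 ε : ι → ℤˣ, Real.cosh (s * rademacherSum ε) = Real.cosh s ^ Fintype.card ι := by
  have hneg := expect_exp_mul_rademacherSum (ι := ι) (-(s : ℂ))
  have hpos := expect_exp_mul_rademacherSum (ι := ι) (s : ℂ)
  refine ofReal_injective ?_
  simp only [ofReal_expect, ofReal_cosh, ofReal_mul, ofReal_pow, cosh.eq_1 (_ * _), ← neg_mul]
  rw [← expect_div, expect_add_distrib, hpos, hneg, cosh_neg, add_self_div_two]

lemma expect_mul_rademacherSum_pow_div_factorial_le [DecidableEq ι] {K : ℕ} (hK : Even K) (τ : ℝ) :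
    (𝔼 ε : ι → ℤˣ, (τ * rademacherSum ε) ^ K) / K.factorial
      ≤ 2 * Real.exp (2 * Fintype.card ι * τ ^ 2) / 2 ^ K := by
  calc (𝔼 ε : ι → ℤˣ, (τ * rademacherSum ε) ^ K) / K.factorial
      = 𝔼 ε : ι → ℤˣ, (τ * rademacherSum ε) ^ K / K.factorial := expect_div _ _ _
    _ ≤ 𝔼 ε : ι → ℤˣ, 2 * Real.cosh (2 * τ * rademacherSum ε) / 2 ^ K := by
        refine expect_le_expect fun ε _ => ?_
        rw [mul_assoc 2 τ]
        exact pow_div_factorial_le_two_mul_cosh hK _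
    _ = 2 * Real.cosh (2 * τ) ^ Fintype.card ι / 2 ^ K := by
        rw [← expect_div, ← mul_expect, expect_cosh_mul_rademacherSum]
    _ ≤ 2 * Real.exp ((2 * τ) ^ 2 / 2) ^ Fintype.card ι / 2 ^ K := by
        gcongr
        exact Real.cosh_le_exp_half_sq _
    _ = 2 * Real.exp (2 * Fintype.card ι * τ ^ 2) / 2 ^ K := by
        rw [← Real.exp_nat_mul]
        ring_nf

lemma norm_expect_exp_mul_shiftSum_sub_cos_pow_le {p : ℕ} [Fact p.Prime] {a : ι → ZMod p}
    (ha : a.Injective) (τ : ℝ) {K : ℕ} (hK : Even K) :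
    ‖𝔼 x, exp ((τ * shiftSum a x : ℝ) * I) - (Real.cos τ : ℂ) ^ Fintype.card ι‖
      ≤ ∑ k ∈ range (K + 1),
          |τ| ^ k * (Fintype.card ι ^ k * (40 * (k + 1) ^ 2 / √p)) / k.factorial
        + 4 * Real.exp (2 * Fintype.card ι * τ ^ 2) / 2 ^ K := by
  classical
  have hcos : 𝔼 ε : ι → ℤˣ, exp ((τ * rademacherSum ε : ℝ) * I)
      = (Real.cos τ : ℂ) ^ Fintype.card ι := by
    rw [ofReal_cos, ← cosh_mul_I, ← expect_exp_mul_rademacherSum]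
    refine expect_congr rfl fun ε _ => ?_
    push_cast
    ring_nf
  rw [← hcos]
  refine (norm_expect_exp_mul_I_sub_expect_exp_mul_I_le _ _ hK).trans (add_le_add ?_ ?_)
  · gcongr with k
    simp only [mul_pow, ← mul_expect]
    rw [← mul_sub, abs_mul, abs_pow]
    gcongr
    exact abs_expect_shiftSum_pow_sub_expect_rademacherSum_pow_le ha k
  · rw [show (4 : ℝ) = 2 * 2 by norm_num, mul_assoc 2 2, mul_div_assoc]
    exact mul_le_mul_of_nonneg_left (expect_mul_rademacherSum_pow_div_factorial_le hK τ)
      zero_le_two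

end CharacteristicFunctions

section Limits

open Filter Topology Finset BigOperators MeasureTheory ProbabilityTheory

lemma cos_sub_one_eq_neg_sq_div_two_mul_sinc_sq (x : ℝ) :
    Real.cos x - 1 = -x ^ 2 / 2 * Real.sinc (x / 2) ^ 2 := by
  rcases eq_or_ne x 0 with rfl | hx
  · simp
  have hcos : Real.cos x = 2 * Real.cos (x / 2) ^ 2 - 1 := by
    rw [← Real.cos_two_mul, mul_div_cancel₀ _ two_ne_zero]
  rw [Real.sinc_of_ne_zero (by positivity), hcos, Real.cos_sq']
  field_simp
  ring

lemma tendsto_cos_div_sqrt_pow (t : ℝ) :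
    Tendsto (fun n : ℕ => Real.cos (t / √n) ^ n) atTop (𝓝 (Real.exp (-t ^ 2 / 2))) := by
  have hsinc : Tendsto (fun n : ℕ => -t ^ 2 / 2 * Real.sinc (t / √n / 2) ^ 2) atTop
      (𝓝 (-t ^ 2 / 2 * Real.sinc (0 / 2) ^ 2)) := by
    refine ((Real.continuous_sinc.tendsto _).comp (Tendsto.div_const ?_ 2)).pow 2 |>.const_mul _
    exact (Real.tendsto_sqrt_atTop.comp tendsto_natCast_atTop_atTop).const_div_atTop t
  rw [zero_div, Real.sinc_zero, one_pow, mul_one] at hsinc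
  have hcos : ∀ᶠ n : ℕ in atTop, -t ^ 2 / 2 * Real.sinc (t / √n / 2) ^ 2
      = n * (Real.cos (t / √n) - 1) := by
    filter_upwards [eventually_gt_atTop 0] with n hn
    rw [cos_sub_one_eq_neg_sq_div_two_mul_sinc_sq, div_pow t, Real.sq_sqrt n.cast_nonneg]
    field_simp
  simpa using Real.tendsto_one_add_pow_exp_of_tendsto (hsinc.congr' hcos)

lemma tendsto_zero_of_forall_eventually_le_add {α β : Type*} {l : Filter α} {m : Filter β}
    [m.NeBot] {f : α → ℝ} {g : β → α → ℝ} {c : β → ℝ} (hf : ∀ x, 0 ≤ f x)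
    (hg : ∀ b, Tendsto (g b) l (𝓝 0)) (hc : Tendsto c m (𝓝 0))
    (hfg : ∀ b, ∀ᶠ x in l, f x ≤ g b x + c b) : Tendsto f l (𝓝 0) := by
  refine (nhds_basis_abs_sub_lt (0 : ℝ)).tendsto_right_iff.mpr fun ε hε => ?_
  obtain ⟨b, hb⟩ := (hc.eventually (gt_mem_nhds (half_pos hε))).exists
  filter_upwards [hfg b, (hg b).eventually (gt_mem_nhds (half_pos hε))] with x hx hgx
  rw [sub_zero, abs_of_nonneg (hf x)]
  linarith

lemma measureReal_gaussianReal_zero_one_Iic (lam : ℝ) :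
    (gaussianReal 0 1).real (Set.Iic lam)
      = 1 / √(2 * Real.pi) * ∫ t in Set.Iic lam, Real.exp (-t ^ 2 / 2) := by
  rw [measureReal_def, gaussianReal_apply_eq_integral 0 one_ne_zero,
    ENNReal.toReal_ofReal (integral_nonneg fun _ => gaussianPDFReal_nonneg _ _ _),
    gaussianPDFReal_def, integral_const_mul]
  simp

lemma charFun_toMeasure_map_uniformOfFintype {Ω : Type*} [Fintype Ω] [Nonempty Ω] (Z : Ω → ℝ)
    (t : ℝ) : charFun ((PMF.uniformOfFintype Ω).map Z).toMeasure t
      = 𝔼 x, Complex.exp (t * Z x * Complex.I) := by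
  let _ : MeasurableSpace Ω := ⊤
  rw [charFun_apply_real, ← PMF.toMeasure_map _ _ measurable_from_top, integral_map
    measurable_from_top.aemeasurable (by fun_prop), PMF.integral_eq_sum,
    Fintype.expect_eq_sum_div_card, Finset.sum_div]
  refine Finset.sum_congr rfl fun x _ => ?_
  simp [Complex.real_smul, div_eq_inv_mul]

lemma measureReal_toMeasure_map_uniformOfFintype {Ω : Type*} [Fintype Ω] [Nonempty Ω]
    (Z : Ω → ℝ) {s : Set ℝ} (hs : MeasurableSet s) [DecidablePred fun x => Z x ∈ s] :
    ((PMF.uniformOfFintype Ω).map Z).toMeasure.real s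
      = (#{x | Z x ∈ s} : ℝ) / Fintype.card Ω := by
  let _ : MeasurableSpace Ω := ⊤
  have : Fintype (Z ⁻¹' s) := Subtype.fintype fun x => Z x ∈ s
  rw [measureReal_def, PMF.toMeasure_map_apply _ _ _ measurable_from_top hs,
    PMF.toMeasure_uniformOfFintype_apply _ (measurable_from_top hs), ENNReal.toReal_div,
    ENNReal.toReal_natCast, ENNReal.toReal_natCast]
  congr 2
  exact Fintype.card_of_subtype _ (by simp)

lemma tendsto_card_div_of_tendsto_expect_exp {α : Type*} {l : Filter α} [l.IsCountablyGenerated]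
    {Ω : α → Type*} [∀ i, Fintype (Ω i)] [∀ i, Nonempty (Ω i)] {Z : ∀ i, Ω i → ℝ}
    {μ : ProbabilityMeasure ℝ}
    (hZ : ∀ t : ℝ, Tendsto (fun i => 𝔼 x, Complex.exp (t * Z i x * Complex.I)) l
      (𝓝 (charFun (μ : Measure ℝ) t)))
    {lam : ℝ} (hlam : (μ : Measure ℝ) {lam} = 0) :
    Tendsto (fun i => (#{x | Z i x ≤ lam} : ℝ) / Fintype.card (Ω i)) l
      (𝓝 ((μ : Measure ℝ).real (Set.Iic lam))) := by
  let ν (i : α) : ProbabilityMeasure ℝ :=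
    ⟨((PMF.uniformOfFintype (Ω i)).map (Z i)).toMeasure, inferInstance⟩
  have hν : Tendsto ν l (𝓝 μ) := by
    refine tendsto_of_seq_tendsto fun u hu => ?_
    refine ProbabilityMeasure.tendsto_iff_tendsto_charFun.mpr fun t => ?_
    exact ((hZ t).comp hu).congr fun n => (charFun_toMeasure_map_uniformOfFintype _ t).symm
  have hIic := ProbabilityMeasure.tendsto_measure_of_null_frontier_of_tendsto' hν
    (E := Set.Iic lam) (by rwa [frontier_Iic])
  refine ((ENNReal.tendsto_toReal (measure_ne_top _ _)).comp hIic).congr fun i => ?_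
  exact measureReal_toMeasure_map_uniformOfFintype (Z i) measurableSet_Iic

end Limits

section CentralLimit

open Filter Topology Finset BigOperators MeasureTheory ProbabilityTheory

variable {α : Type*} {l : Filter α} {p : α → ℕ} [∀ i, Fact (p i).Prime] {H : α → ℕ}
  {a : ∀ i, Fin (H i) → ZMod (p i)}

lemma tendsto_expect_exp_mul_shiftSum (ha : ∀ᶠ i in l, (a i).Injective)
    (hH : Tendsto H l atTop)
    (hsmall : ∀ r : ℕ, 1 ≤ r → Tendsto (fun i => (H i : ℝ) ^ r / √(p i)) l (𝓝 0)) (t : ℝ) :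
    Tendsto (fun i => 𝔼 x, Complex.exp ((t / √(H i) * shiftSum (a i) x : ℝ) * Complex.I)) l
      (𝓝 (Complex.exp (-t ^ 2 / 2))) := by
  have hcos : Tendsto (fun i => (Real.cos (t / √(H i)) : ℂ) ^ H i) l
      (𝓝 (Complex.exp (-t ^ 2 / 2))) := by
    have := (Complex.continuous_ofReal.tendsto _).comp ((tendsto_cos_div_sqrt_pow t).comp hH)
    simpa [Function.comp_def] using this
  suffices hdiff : Tendsto (fun i => ‖𝔼 x, Complex.exp ((t / √(H i) * shiftSum (a i) x : ℝ)
      * Complex.I) - (Real.cos (t / √(H i)) : ℂ) ^ H i‖) l (𝓝 0) by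
    simpa using (tendsto_zero_iff_norm_tendsto_zero.mpr hdiff).add hcos
  refine tendsto_zero_of_forall_eventually_le_add (m := atTop)
    (g := fun m i => ∑ k ∈ range (2 * m + 1),
      |t| ^ k * (40 * (k + 1) ^ 2) / k.factorial * ((H i : ℝ) ^ (k + 1) / √(p i)))
    (c := fun m : ℕ => 4 * Real.exp (2 * t ^ 2) / 2 ^ (2 * m)) (fun i => norm_nonneg _)
    (fun m => ?_) ?_ fun m => ?_
  · rw [← sum_const_zero (s := range (2 * m + 1))]
    refine tendsto_finsetSum _ fun k _ => ?_
    simpa using (hsmall (k + 1) k.succ_pos).const_mul (|t| ^ k * (40 * (k + 1) ^ 2) / k.factorial)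
  · simp only [pow_mul]
    exact (tendsto_pow_atTop_atTop_of_one_lt (by norm_num)).const_div_atTop _
  · filter_upwards [ha, hH.eventually_ge_atTop 1] with i hai hHi
    have hH1 : (1 : ℝ) ≤ H i := mod_cast hHi
    have h := norm_expect_exp_mul_shiftSum_sub_cos_pow_le hai (t / √(H i)) (even_two_mul m)
    rw [Fintype.card_fin, div_pow t, Real.sq_sqrt (Nat.cast_nonneg _),
      show 2 * (H i : ℝ) * (t ^ 2 / H i) = 2 * t ^ 2 by field_simp] at h
    refine h.trans (add_le_add_left (sum_le_sum fun k _ => ?_) _)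
    have habs : |t / √(H i)| ≤ |t| := by
      rw [abs_div, abs_of_nonneg (Real.sqrt_nonneg _)]
      exact div_le_self (abs_nonneg _) (Real.one_le_sqrt.mpr hH1)
    calc |t / √(H i)| ^ k * (H i ^ k * (40 * (k + 1) ^ 2 / √(p i))) / k.factorial
        ≤ |t| ^ k * ((H i : ℝ) ^ (k + 1) * (40 * (k + 1) ^ 2 / √(p i))) / k.factorial := by
          gcongr
          exact k.le_succ
      _ = |t| ^ k * (40 * (k + 1) ^ 2) / k.factorial * ((H i : ℝ) ^ (k + 1) / √(p i)) := by
          ring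

theorem davenport_erdos_central_limit_general [l.IsCountablyGenerated]
    (ha : ∀ᶠ i in l, (a i).Injective) (hH : Tendsto H l atTop)
    (hsmall : ∀ r : ℕ, 1 ≤ r → Tendsto (fun i => (H i : ℝ) ^ r / √(p i)) l (𝓝 0)) (lam : ℝ) :
    Tendsto (fun i => (#{x | shiftSum (a i) x ≤ lam * √(H i)} : ℝ) / p i) l
      (𝓝 (1 / √(2 * Real.pi) * ∫ t in Set.Iic lam, Real.exp (-t ^ 2 / 2))) := by
  have hcharFun (t : ℝ) : Tendsto
      (fun i => 𝔼 x, Complex.exp (t * (shiftSum (a i) x / √(H i) : ℝ) * Complex.I)) l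
      (𝓝 (charFun (gaussianReal 0 1) t)) := by
    have h := tendsto_expect_exp_mul_shiftSum ha hH hsmall t
    simp only [div_mul_eq_mul_div, mul_div_assoc, Complex.ofReal_mul] at h
    simpa [charFun_gaussianReal, neg_div] using h
  have := nullSingletonClass_gaussianReal (μ := 0) one_ne_zero
  have hcard := tendsto_card_div_of_tendsto_expect_exp
    (μ := ⟨gaussianReal 0 1, inferInstance⟩) hcharFun
    (measure_singleton (μ := gaussianReal 0 1) lam)
  rw [← measureReal_gaussianReal_zero_one_Iic]
  refine hcard.congr' ?_
  filter_upwards [hH.eventually_gt_atTop 0] with i hHi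
  have hsqrt : 0 < √(H i) := Real.sqrt_pos.mpr (mod_cast hHi)
  simp only [ZMod.card, div_le_iff₀ hsqrt]

lemma shiftSum_one_add_natCast {q : ℕ} [Fact q.Prime] (h x : ℕ) :
    shiftSum (fun j : Fin h => (1 + j : ZMod q)) x
      = ((∑ n ∈ Icc (x + 1) (x + h), legendreSym q n : ℤ) : ℝ) := by
  rw [← Ico_add_one_right_eq_Icc, sum_Ico_eq_sum_range, add_right_comm, Nat.add_sub_cancel_left,
    ← Fin.sum_univ_eq_sum_range fun j => legendreSym q (x + 1 + j : ℕ), shiftSum, Int.cast_sum]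
  simp only [legendreSym, Int.cast_natCast, Int.cast_add, Int.cast_one, Nat.cast_add, Nat.cast_one,
    add_assoc]

lemma ncard_setOf_lt_and_natCast {q : ℕ} [NeZero q] (P : ZMod q → Prop) [DecidablePred P] :
    {x : ℕ | x < q ∧ P x}.ncard = #{x | P x} := by
  rw [← Set.ncard_coe_finset, ← Set.ncard_image_of_injective _ (ZMod.val_injective q)]
  congr 1
  ext x
  simp only [coe_filter_univ, Set.mem_image, Set.mem_ofPred_eq]
  constructor
  · rintro ⟨hx, hP⟩
    exact ⟨x, hP, ZMod.val_cast_of_lt hx⟩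
  · rintro ⟨y, hy, rfl⟩
    exact ⟨y.val_lt, by rwa [ZMod.natCast_zmod_val]⟩

lemma injective_one_add_natCast {q h : ℕ} (hq : h ≤ q) :
    (fun j : Fin h => (1 + j : ZMod q)).Injective := by
  intro i j hij
  have := CharP.natCast_injOn_Iio (ZMod q) q (i.2.trans_le hq) (j.2.trans_le hq)
    (add_left_cancel hij)
  exact Fin.ext this

lemma ncard_setOf_sum_legendreSym_le {q : ℕ} [hq : Fact q.Prime] (h : ℕ) (c : ℝ) :
    {x : ℕ | x < q ∧ ∃ hp : Fact q.Prime,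
        ((∑ n ∈ Icc (x + 1) (x + h), @legendreSym q hp n : ℤ) : ℝ) ≤ c}.ncard
      = #{x | shiftSum (fun j : Fin h => (1 + j : ZMod q)) x ≤ c} := by
  simp only [exists_prop_of_true hq, ← shiftSum_one_add_natCast]
  exact ncard_setOf_lt_and_natCast fun x => shiftSum (fun j : Fin h => (1 + j : ZMod q)) x ≤ c

lemma eventually_le_of_tendsto_div_sqrt (hHp : Tendsto (fun i => (H i : ℝ) / √(p i)) l (𝓝 0)) :
    ∀ᶠ i in l, H i ≤ p i := by
  filter_upwards [hHp.eventually_lt_const one_pos] with i hi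
  have hp : (1 : ℝ) ≤ p i := mod_cast (Fact.out : (p i).Prime).one_le
  rw [div_lt_one (by positivity)] at hi
  exact_mod_cast hi.le.trans (Real.sqrt_le_self_iff.mpr (.inr hp))

end CentralLimit

/-- Theorem 10.1 (Davenport–Erdős): let `h : ℕ → ℕ` satisfy `h(q) ≥ 1`, `h(q) → ∞` and
`h(q)^r / √q → 0` (for every `r ≥ 1`) as `q → ∞` through the primes. For an odd prime `p` and
`x ∈ {0, …, p-1}` put `S_{h(p)}(x) = ∑_{n=x+1}^{x+h(p)} χ_p(n)`. Then for every real `λ`,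
`(1/p) #{x ∈ {0,…,p-1} : S_{h(p)}(x) ≤ λ √h(p)} → (1/√(2π)) ∫_{-∞}^λ e^{-t²/2} dt`
as `p → ∞` through the primes. -/
theorem davenport_erdos_central_limit (h : ℕ → ℕ) (h1 : ∀ q, 1 ≤ h q)
    (h2 : Filter.Tendsto h
      (Filter.atTop ⊓ Filter.principal {q : ℕ | q.Prime}) Filter.atTop)
    (h3 : ∀ r : ℕ, 1 ≤ r →
      Filter.Tendsto (fun q : ℕ => (h q : ℝ) ^ r / Real.sqrt q)
        (Filter.atTop ⊓ Filter.principal {q : ℕ | q.Prime}) (nhds 0)) :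
    ∀ lam : ℝ,
      Filter.Tendsto (fun p : ℕ =>
          ({x : ℕ | x < p ∧ ∃ hp : Fact p.Prime,
              ((∑ n ∈ Finset.Icc (x + 1) (x + h p), @legendreSym p hp (n : ℤ) : ℤ) : ℝ)
                ≤ lam * Real.sqrt (h p)}.ncard : ℝ) / (p : ℝ))
        (Filter.atTop ⊓ Filter.principal {p : ℕ | p.Prime})
        (nhds ((1 / Real.sqrt (2 * Real.pi)) * ∫ t in Set.Iic lam, Real.exp (-t ^ 2 / 2))) := by
  intro lam
  have (q : {q : ℕ | q.Prime}) : Fact q.1.Prime := ⟨q.2⟩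
  simp only [← Filter.subtype_coe_map_comap, Filter.tendsto_map'_iff] at h2 h3 ⊢
  have hle := eventually_le_of_tendsto_div_sqrt (by simpa using! h3 1 le_rfl)
  refine (davenport_erdos_central_limit_general (hle.mono fun q => injective_one_add_natCast)
    h2 h3 lam).congr fun q => ?_
  simp only [Function.comp_apply, ncard_setOf_sum_legendreSym_le]
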